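/- Let X be a real Banach space, p ≥ 1, B : X → X a continuous linear operator with B^p = 0, and f : ℝ → X a p times differentiable function. Then x(t) := −Σ_{k=0}^{p−1} B^k (f^{(k)}(t)) is differentiable and satisfies B(x'(t)) = x(t) + f(t) for all t, and it is the unique differentiable solution of this equation on ℝ. -/

import Mathlib

/-!
With `D = d/dt` the equation reads `(B D - 1) x = f`. Since `B` commutes with `D`, applying
`B D - 1` to the truncated Neumann sum `-∑_{k < p} (B D) ^ k f` telescopes to
`f - B ^ p (D ^ p f)`, which is `f` when `B ^ p = 0`.

For uniqueness, the difference `z` of two solutions satisfies `B z' = z`, hence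
`(B ^ (n + 1) z)' = B ^ n z`. Thus `B ^ (n + 1) z = 0` implies `B ^ n z = 0`, and descending
from `B ^ p z = 0` gives `z = 0`.
-/

section NilpotentEquation

variable {𝕜 E : Type*} [NontriviallyNormedField 𝕜] [NormedAddCommGroup E] [NormedSpace 𝕜 E]
  {B : E →L[𝕜] E} {p : ℕ} {f : 𝕜 → E} {t : 𝕜}

/-- The candidate solution `-∑_{k < p} B ^ k f^{(k)}` of `B x' = x + f`: minus the Neumann series
of `(1 - B d/dt)⁻¹` applied to `f`, cut off after `p` terms. -/
noncomputable def truncatedNeumannSolution (B : E →L[𝕜] E) (p : ℕ) (f : 𝕜 → E) (t : 𝕜) : E :=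
  -∑ k ∈ Finset.range p, (B ^ k) (iteratedDeriv k f t)

theorem hasDerivAt_truncatedNeumannSolution
    (hf : ∀ k < p, DifferentiableAt 𝕜 (iteratedDeriv k f) t) :
    HasDerivAt (truncatedNeumannSolution B p f)
      (-∑ k ∈ Finset.range p, (B ^ k) (iteratedDeriv (k + 1) f t)) t := by
  refine HasDerivAt.fun_neg (HasDerivAt.fun_sum fun k hk => ?_)
  rw [iteratedDeriv_succ]
  exact (B ^ k).hasFDerivAt.comp_hasDerivAt t (hf k (Finset.mem_range.mp hk)).hasDerivAt

theorem apply_deriv_truncatedNeumannSolution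
    (hf : ∀ k < p, DifferentiableAt 𝕜 (iteratedDeriv k f) t) :
    B (deriv (truncatedNeumannSolution B p f) t) =
      truncatedNeumannSolution B p f t + f t - (B ^ p) (iteratedDeriv p f t) := by
  let term (k : ℕ) : E := (B ^ k) (iteratedDeriv k f t)
  have apply_sum : B (∑ k ∈ Finset.range p, (B ^ k) (iteratedDeriv (k + 1) f t)) =
      ∑ k ∈ Finset.range p, term (k + 1) := by
    simp only [term, map_sum, pow_succ', mul_apply_eq_comp]
  have shift : ∑ k ∈ Finset.range p, term (k + 1) + f t =
      ∑ k ∈ Finset.range p, term k + term p := by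
    have term_zero : term 0 = f t := by simp [term]
    rw [← term_zero, ← Finset.sum_range_succ', Finset.sum_range_succ]
  calc B (deriv (truncatedNeumannSolution B p f) t)
      = -∑ k ∈ Finset.range p, term (k + 1) := by
        rw [(hasDerivAt_truncatedNeumannSolution hf).deriv, map_neg, apply_sum]
    _ = -∑ k ∈ Finset.range p, term k + f t - term p := by
        rw [eq_sub_of_add_eq shift]
        abel

theorem hasDerivAt_pow_succ_apply_of_apply_deriv_eq_self {z : 𝕜 → E}
    (hz : DifferentiableAt 𝕜 z t) (hBz : B (deriv z t) = z t) (n : ℕ) :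
    HasDerivAt (fun s => (B ^ (n + 1)) (z s)) ((B ^ n) (z t)) t := by
  have pow_apply : (B ^ (n + 1)) (deriv z t) = (B ^ n) (z t) := by
    rw [pow_succ, mul_apply_eq_comp, hBz]
  rw [← pow_apply]
  exact (B ^ (n + 1)).hasFDerivAt.comp_hasDerivAt t hz.hasDerivAt

theorem eq_zero_of_apply_deriv_eq_self_of_pow_apply_eq_zero {z : 𝕜 → E}
    (hz : Differentiable 𝕜 z) (hBz : ∀ t, B (deriv z t) = z t) {n : ℕ}
    (hn : ∀ t, (B ^ n) (z t) = 0) : z = 0 := by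
  induction n with
  | zero => exact funext hn
  | succ n ih =>
    refine ih fun t => ?_
    have deriv_eq := hasDerivAt_pow_succ_apply_of_apply_deriv_eq_self (hz t) (hBz t) n
    simp only [hn] at deriv_eq
    exact deriv_eq.unique (hasDerivAt_const t 0)

theorem eq_of_apply_deriv_eq_add_of_pow_eq_zero (hBp : B ^ p = 0) {x y : 𝕜 → E}
    (hx : Differentiable 𝕜 x) (hxf : ∀ t, B (deriv x t) = x t + f t)
    (hy : Differentiable 𝕜 y) (hyf : ∀ t, B (deriv y t) = y t + f t) : x = y := by
  refine sub_eq_zero.mp <| eq_zero_of_apply_deriv_eq_self_of_pow_apply_eq_zero (B := B) (n := p)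
    (hx.sub hy) (fun t => ?_) fun t => ?_
  · rw [deriv_sub (hx t) (hy t), map_sub, hxf, hyf, add_sub_add_right_eq_sub, Pi.sub_apply]
  · rw [hBp, zero_apply]

theorem stmt9_general (hBp : B ^ p = 0)
    (hf : ∀ k < p, Differentiable 𝕜 (iteratedDeriv k f)) :
    Differentiable 𝕜 (truncatedNeumannSolution B p f) ∧
      (∀ t, B (deriv (truncatedNeumannSolution B p f) t) =
        truncatedNeumannSolution B p f t + f t) ∧
      ∀ y : 𝕜 → E, Differentiable 𝕜 y → (∀ t, B (deriv y t) = y t + f t) →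
        y = truncatedNeumannSolution B p f := by
  have differentiable : Differentiable 𝕜 (truncatedNeumannSolution B p f) := fun t =>
    (hasDerivAt_truncatedNeumannSolution fun k hk => hf k hk t).differentiableAt
  have solves (t : 𝕜) : B (deriv (truncatedNeumannSolution B p f) t) =
      truncatedNeumannSolution B p f t + f t := by
    rw [apply_deriv_truncatedNeumannSolution fun k hk => hf k hk t, hBp,
      zero_apply, sub_zero]
  exact ⟨differentiable, solves, fun y hy hyf =>
    eq_of_apply_deriv_eq_add_of_pow_eq_zero hBp hy hyf differentiable solves⟩

end NilpotentEquation

/-- if `B ^ p = 0` with `p ≥ 1` and `f` is `p` times differentiable,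
then `x t = -∑_{k<p} B^k (f^{(k)} t)` is differentiable, solves
`B x' = x + f`, and is the unique differentiable solution on `ℝ`. -/
theorem stmt9
    {X : Type*} [NormedAddCommGroup X] [NormedSpace ℝ X] [CompleteSpace X]
    (p : ℕ) (hp : 1 ≤ p)
    (B : X →L[ℝ] X) (hBp : B ^ p = 0)
    (f : ℝ → X) (hf : ∀ k < p, Differentiable ℝ (iteratedDeriv k f)) :
    Differentiable ℝ (fun t => -∑ k ∈ Finset.range p, (B ^ k) (iteratedDeriv k f t)) ∧
      (∀ t : ℝ,
        B (deriv (fun s => -∑ k ∈ Finset.range p, (B ^ k) (iteratedDeriv k f s)) t)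
          = (-∑ k ∈ Finset.range p, (B ^ k) (iteratedDeriv k f t)) + f t) ∧
      ∀ y : ℝ → X, Differentiable ℝ y → (∀ t : ℝ, B (deriv y t) = y t + f t) →
        y = fun t => -∑ k ∈ Finset.range p, (B ^ k) (iteratedDeriv k f t) :=
  stmt9_general hBp hf
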